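/- Let I ∈ Ins(Ω,H,K) and J ∈ Ins(Λ,H,V) be two compatible instruments. Then X and Y are compatible for every choice of X ∈ {I, A^I, Φ^I} and Y ∈ {J, A^J, Φ^J}; i.e., compatibility of the instruments implies compatibility when either instrument is replaced by its induced POVM or its induced channel. -/

import Mathlib

open scoped Kronecker ComplexOrder
open Matrix

noncomputable section

/-- Linear maps between matrix algebras, representing super-operators
`L(H) → L(K)` for finite-dimensional Hilbert spaces with index types `dH`, `dK`. -/
abbrev MatMap (dH dK : Type) : Type := Matrix dH dH ℂ →ₗ[ℂ] Matrix dK dK ℂ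

variable {Ω Λ dH dK dV dA dA' : Type}

/-- The Choi matrix of a super-operator. -/
def choiMatrix [DecidableEq dH] (Φ : MatMap dH dK) : Matrix (dH × dK) (dH × dK) ℂ :=
  fun p q => Φ (Matrix.single p.1 q.1 1) p.2 q.2

/-- Complete positivity of a super-operator (positivity of its Choi matrix). -/
def IsCP [Fintype dH] [DecidableEq dH] [Fintype dK] (Φ : MatMap dH dK) : Prop :=
  (choiMatrix Φ).PosSemidef

/-- A quantum state: a positive semidefinite matrix of unit trace. -/
def IsState [Fintype dH] (ρ : Matrix dH dH ℂ) : Prop := ρ.PosSemidef ∧ ρ.trace = 1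

/-- Trace-nonincreasing super-operator. -/
def IsTNI [Fintype dH] [Fintype dK] (Φ : MatMap dH dK) : Prop :=
  ∀ ρ : Matrix dH dH ℂ, ρ.PosSemidef → (Φ ρ).trace ≤ ρ.trace

/-- Trace-preserving super-operator. -/
def IsTP [Fintype dH] [Fintype dK] (Φ : MatMap dH dK) : Prop :=
  ∀ ρ : Matrix dH dH ℂ, (Φ ρ).trace = ρ.trace

/-- A quantum instrument with outcome set `Ω` from system `dH` to system `dK`:
a family of completely positive trace-nonincreasing maps summing to a channel. -/
structure Instrument (Ω dH dK : Type) [Fintype Ω] [Fintype dH] [DecidableEq dH]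
    [Fintype dK] : Type where
  op : Ω → MatMap dH dK
  cp : ∀ x, IsCP (op x)
  tni : ∀ x, IsTNI (op x)
  tp : IsTP (∑ x, op x)

/-- A quantum channel: a completely positive trace-preserving super-operator. -/
structure Channel (dH dK : Type) [Fintype dH] [DecidableEq dH] [Fintype dK] : Type where
  map : MatMap dH dK
  cp : IsCP map
  tp : IsTP map

/-- A POVM with outcome set `Ω` on system `d`. -/
structure POVM (Ω d : Type) [Fintype Ω] [Fintype d] [DecidableEq d] : Type where
  elem : Ω → Matrix d d ℂ
  pos : ∀ x, (elem x).PosSemidef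
  sum_eq : ∑ x, elem x = 1

/-- The effect (induced POVM element) of an operation `Φ`:
the unique matrix `A` with `tr[A ρ] = tr[Φ ρ]` for all `ρ`. -/
def dualId [Fintype dH] [DecidableEq dH] [Fintype dK] (Φ : MatMap dH dK) :
    Matrix dH dH ℂ :=
  fun i j => (Φ (Matrix.single j i 1)).trace

/-- Partial trace over the first tensor factor. -/
def ptraceL [Fintype dA] (M : Matrix (dA × dK) (dA × dK) ℂ) : Matrix dK dK ℂ :=
  fun i j => ∑ a, M (a, i) (a, j)

/-- Partial trace over the second tensor factor. -/
def ptraceR [Fintype dV] (M : Matrix (dK × dV) (dK × dV) ℂ) : Matrix dK dK ℂ :=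
  fun i j => ∑ b, M (i, b) (j, b)

/-- Compatibility of two instruments: existence of a joint instrument whose
partial-trace marginals (summed over the other outcome) reproduce both instruments
on all states. -/
def InsCompatible [Fintype Ω] [Fintype Λ] [Fintype dH] [DecidableEq dH] [Fintype dK]
    [Fintype dV] (I : Instrument Ω dH dK) (J : Instrument Λ dH dV) : Prop :=
  ∃ G : Instrument (Ω × Λ) dH (dK × dV),
    (∀ y, ∀ ρ : Matrix dH dH ℂ, IsState ρ → ∑ x, ptraceL (G.op (x, y) ρ) = J.op y ρ) ∧
    (∀ x, ∀ ρ : Matrix dH dH ℂ, IsState ρ → ∑ y, ptraceR (G.op (x, y) ρ) = I.op x ρ)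

/-- Compatibility of an instrument and a channel (a one-outcome instrument). -/
def InsChCompatible [Fintype Ω] [Fintype dH] [DecidableEq dH] [Fintype dK] [Fintype dV]
    (I : Instrument Ω dH dK) (Ψ : Channel dH dV) : Prop :=
  ∃ G : Instrument Ω dH (dK × dV),
    (∀ ρ : Matrix dH dH ℂ, IsState ρ → ∑ x, ptraceL (G.op x ρ) = Ψ.map ρ) ∧
    (∀ x, ∀ ρ : Matrix dH dH ℂ, IsState ρ → ptraceR (G.op x ρ) = I.op x ρ)

/-- Compatibility of two channels. -/
def ChCompatible [Fintype dH] [DecidableEq dH] [Fintype dK] [Fintype dV]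
    (Φ : Channel dH dK) (Ψ : Channel dH dV) : Prop :=
  ∃ Γ : Channel dH (dK × dV),
    (∀ ρ : Matrix dH dH ℂ, IsState ρ → ptraceL (Γ.map ρ) = Ψ.map ρ) ∧
    (∀ ρ : Matrix dH dH ℂ, IsState ρ → ptraceR (Γ.map ρ) = Φ.map ρ)

/-- Compatibility of a POVM and an instrument: existence of a joint instrument `G`
with `∑ x, G.op (x, y) = J.op y` and whose induced POVM has the POVM `A` as a margin. -/
def POVMInsCompatible [Fintype Ω] [Fintype Λ] [Fintype dH] [DecidableEq dH] [Fintype dK]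
    (A : POVM Ω dH) (J : Instrument Λ dH dK) : Prop :=
  ∃ G : Instrument (Ω × Λ) dH dK,
    (∀ y, ∑ x, G.op (x, y) = J.op y) ∧
    (∀ x, ∑ y, dualId (G.op (x, y)) = A.elem x)

/-- Compatibility (joint measurability) of two POVMs. -/
def POVMCompatible [Fintype Ω] [Fintype Λ] [Fintype dH] [DecidableEq dH]
    (A : POVM Ω dH) (B : POVM Λ dH) : Prop :=
  ∃ G : POVM (Ω × Λ) dH,
    (∀ y, ∑ x, G.elem (x, y) = B.elem y) ∧
    (∀ x, ∑ y, G.elem (x, y) = A.elem x)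

/-- Compatibility of a POVM and a channel: existence of an instrument implementing both. -/
def POVMChCompatible [Fintype Ω] [Fintype dH] [DecidableEq dH] [Fintype dK]
    (A : POVM Ω dH) (Ψ : Channel dH dK) : Prop :=
  ∃ G : Instrument Ω dH dK,
    (∑ x, G.op x) = Ψ.map ∧ ∀ x, dualId (G.op x) = A.elem x

/-- Instrument postprocessing: `I ⪯ J` if `I_x = ∑ y, R^(y)_x ∘ J_y` for
a family of instruments `R^(y)`. -/
def Postprocessed [Fintype Ω] [Fintype Λ] [Fintype dH] [DecidableEq dH] [Fintype dK]
    [Fintype dV] [DecidableEq dV] (I : Instrument Ω dH dK) (J : Instrument Λ dH dV) : Prop :=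
  ∃ R : Λ → Instrument Ω dV dK, ∀ x, I.op x = ∑ y, (R y).op x ∘ₗ J.op y

/-- An instrument `I` does not disturb an instrument `J`: `J_y ∘ Φ^I = J_y`. -/
def NonDisturbs [Fintype Ω] [Fintype Λ] [Fintype dH] [DecidableEq dH] [Fintype dV]
    (I : Instrument Ω dH dH) (J : Instrument Λ dH dV) : Prop :=
  ∀ y, J.op y ∘ₗ (∑ x, I.op x) = J.op y

/-- An instrument `I` does not disturb a channel `Ψ`: `Ψ ∘ Φ^I = Ψ`. -/
def InsNonDisturbsCh [Fintype Ω] [Fintype dH] [DecidableEq dH] [Fintype dV]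
    (I : Instrument Ω dH dH) (Ψ : Channel dH dV) : Prop :=
  Ψ.map ∘ₗ (∑ x, I.op x) = Ψ.map

/-- An instrument `I` does not disturb a POVM `A`:
the statistics of `A` are unchanged by the channel induced by `I`. -/
def InsNonDisturbsPOVM [Fintype Ω] [Fintype Λ] [Fintype dH] [DecidableEq dH]
    (I : Instrument Ω dH dH) (A : POVM Λ dH) : Prop :=
  ∀ y, ∀ ρ : Matrix dH dH ℂ,
    (A.elem y * ((∑ x, I.op x) ρ)).trace = (A.elem y * ρ).trace

/-- A POVM `A` does not disturb an instrument `J`: some instrument measuring `A`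
does not disturb `J`. -/
def POVMNonDisturbs [Fintype Ω] [Fintype Λ] [Fintype dH] [DecidableEq dH] [Fintype dV]
    (A : POVM Ω dH) (J : Instrument Λ dH dV) : Prop :=
  ∃ I : Instrument Ω dH dH, (∀ x, dualId (I.op x) = A.elem x) ∧ NonDisturbs I J

/-- A POVM `A` does not disturb a channel `Ψ`. -/
def POVMNonDisturbsCh [Fintype Ω] [Fintype dH] [DecidableEq dH] [Fintype dV]
    (A : POVM Ω dH) (Ψ : Channel dH dV) : Prop :=
  ∃ I : Instrument Ω dH dH, (∀ x, dualId (I.op x) = A.elem x) ∧ InsNonDisturbsCh I Ψ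

/-- A POVM `A` does not disturb a POVM `B`. -/
def POVMNonDisturbsPOVM [Fintype Ω] [Fintype Λ] [Fintype dH] [DecidableEq dH]
    (A : POVM Ω dH) (B : POVM Λ dH) : Prop :=
  ∃ I : Instrument Ω dH dH, (∀ x, dualId (I.op x) = A.elem x) ∧ InsNonDisturbsPOVM I B

/-- A sharp (projection-valued) POVM. -/
def IsSharp [Fintype Ω] [Fintype dH] [DecidableEq dH] (A : POVM Ω dH) : Prop :=
  ∀ x, A.elem x * A.elem x = A.elem x

/-- `(H_A, W, E)` is a dilation of the instrument `I`:
`W` is an isometry `H → H_A ⊗ K` and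
`I_x(ρ) = Tr_{H_A}[W ρ W* (E(x) ⊗ 1_K)]` on all states. -/
def IsDilation [Fintype Ω] [Fintype dH] [DecidableEq dH] [Fintype dK] [DecidableEq dK]
    [Fintype dA] [DecidableEq dA] (I : Instrument Ω dH dK)
    (W : Matrix (dA × dK) dH ℂ) (E : POVM Ω dA) : Prop :=
  Wᴴ * W = 1 ∧
  ∀ x, ∀ ρ : Matrix dH dH ℂ, IsState ρ →
    I.op x ρ = ptraceL (W * ρ * Wᴴ * (E.elem x ⊗ₖ (1 : Matrix dK dK ℂ)))

/-- Minimality of a Stinespring isometry `W : H → H_A ⊗ K`: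
the span of `{(1 ⊗ B) W φ}` is everything. -/
def IsMinimalW [Fintype dH] [Fintype dK] [DecidableEq dK] [Fintype dA] [DecidableEq dA]
    (W : Matrix (dA × dK) dH ℂ) : Prop :=
  Submodule.span ℂ {v : (dA × dK) → ℂ |
    ∃ (B : Matrix dK dK ℂ) (φ : dH → ℂ),
      v = ((1 : Matrix dA dA ℂ) ⊗ₖ B) *ᵥ (W *ᵥ φ)} = ⊤

open scoped MatrixOrder in
/-- `IC` is the complementary instrument of the instrument dilated by `(W, E)`:
`IC_x(ρ) = Tr_K[(√E(x) ⊗ 1) W ρ W* (√E(x) ⊗ 1)]`. -/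
def IsComplementaryOf [Fintype Ω] [Fintype dH] [DecidableEq dH] [Fintype dK]
    [DecidableEq dK] [Fintype dA] [DecidableEq dA] (W : Matrix (dA × dK) dH ℂ) (E : POVM Ω dA)
    (IC : Instrument Ω dH dA) : Prop :=
  ∀ x, ∀ ρ : Matrix dH dH ℂ,
    IC.op x ρ =
      ptraceR ((CFC.sqrt (E.elem x) ⊗ₖ (1 : Matrix dK dK ℂ)) * (W * ρ * Wᴴ) *
        (CFC.sqrt (E.elem x) ⊗ₖ (1 : Matrix dK dK ℂ)))

/-- A measure-and-prepare instrument: `I_x(ρ) = tr[A(x) ρ] ξ_x`. -/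
def IsMeasureAndPrepare [Fintype Ω] [Fintype dH] [DecidableEq dH] [Fintype dK]
    [DecidableEq dK] (I : Instrument Ω dH dK) : Prop :=
  ∃ (A : POVM Ω dH) (ξ : Ω → Matrix dK dK ℂ),
    (∀ x, IsState (ξ x)) ∧
    ∀ x, ∀ ρ : Matrix dH dH ℂ, I.op x ρ = ((A.elem x * ρ).trace) • ξ x

/-- A pure state: a state which is a (rank-one) projection. -/
def IsPureState [Fintype dK] (ρ : Matrix dK dK ℂ) : Prop :=
  IsState ρ ∧ ρ * ρ = ρ

/-- A rank-1 POVM: every effect has rank at most one. -/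
def IsRankOnePOVM [Fintype Ω] [Fintype dH] [DecidableEq dH] (A : POVM Ω dH) : Prop :=
  ∀ x, (A.elem x).rank ≤ 1

/-- POVM postprocessing: `B(y) = ∑ x, ν x y • A(x)` for a stochastic matrix `ν`. -/
def POVMPostprocessed [Fintype Ω] [Fintype Λ] [Fintype dH] [DecidableEq dH]
    (B : POVM Λ dH) (A : POVM Ω dH) : Prop :=
  ∃ ν : Ω → Λ → ℝ, (∀ x y, 0 ≤ ν x y) ∧ (∀ x, ∑ y, ν x y = 1) ∧
    ∀ y, B.elem y = ∑ x, (ν x y : ℂ) • A.elem x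

/-- A measure-and-prepare instrument preparing pure states. -/
def IsMeasureAndPreparePure [Fintype Ω] [Fintype dH] [DecidableEq dH] [Fintype dK]
    [DecidableEq dK] (I : Instrument Ω dH dK) : Prop :=
  ∃ (A : POVM Ω dH) (ξ : Ω → Matrix dK dK ℂ),
    (∀ x, IsPureState (ξ x)) ∧
    ∀ x, ∀ ρ : Matrix dH dH ℂ, I.op x ρ = ((A.elem x * ρ).trace) • ξ x

/-! Each derived notion of compatibility is witnessed by a coarse-graining of the joint instrument:
discard one tensor factor of the output, sum over one of the outcomes, or pass to effects.
Effects do not see a trace-preserving map applied to the output, so the effects of either instrument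
can be read off the joint instrument after tracing out either factor. A completely positive family
whose sum preserves traces is automatically trace-nonincreasing, so a coarse-graining of an
instrument is again an instrument. Equality on states is equality of linear maps because the states
span the matrix algebra. -/

attribute [ext] Channel POVM

section PosSemidef

open scoped MatrixOrder in
theorem trace_mul_nonneg_of_posSemidef {n 𝕜 : Type*} [Fintype n] [RCLike 𝕜] {A B : Matrix n n 𝕜}
    (hA : A.PosSemidef) (hB : B.PosSemidef) : 0 ≤ (A * B).trace := by
  classical
  obtain ⟨C, rfl⟩ := CStarAlgebra.nonneg_iff_eq_star_mul_self.mp hB.nonneg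
  rw [← Matrix.mul_assoc, trace_mul_comm, ← Matrix.mul_assoc]
  exact (hA.mul_mul_conjTranspose_same C).trace_nonneg

theorem posSemidef_sum_sum_blocks {ι κ R : Type*} [Fintype ι] [Finite κ] [Ring R]
    [PartialOrder R] [StarRing R] {M : Matrix (ι × κ) (ι × κ) R} (hM : M.PosSemidef) :
    (of fun p q => ∑ i, ∑ j, M (i, p) (j, q)).PosSemidef := by
  classical
  have := Fintype.ofFinite κ
  let W : Matrix κ (ι × κ) R := of fun p r => if p = r.2 then 1 else 0
  have hW : of (fun p q => ∑ i, ∑ j, M (i, p) (j, q)) = W * M * Wᴴ := by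
    ext p q
    simp only [W, Matrix.mul_apply, of_apply, conjTranspose_apply, Fintype.sum_prod_type,
      ite_mul, one_mul, zero_mul, apply_ite star, star_one, star_zero, mul_ite, mul_one, mul_zero,
      Finset.sum_ite_eq, Finset.mem_univ, if_true]
    exact Finset.sum_comm
  rw [hW]
  exact hM.mul_mul_conjTranspose_same W

theorem posSemidef_sum_sum_mul {ι κ l 𝕜 : Type*} [Fintype ι] [Finite κ] [Finite l] [RCLike 𝕜]
    {A : Matrix (κ × ι) (κ × ι) 𝕜} {B : Matrix (ι × l) (ι × l) 𝕜}
    (hA : A.PosSemidef) (hB : B.PosSemidef) :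
    (of fun p q : κ × l => ∑ i, ∑ j, A (p.1, i) (q.1, j) * B (i, p.2) (j, q.2)).PosSemidef := by
  have := Fintype.ofFinite κ
  have := Fintype.ofFinite l
  let f : ι × (κ × l) → (κ × ι) × (ι × l) := fun r => ((r.2.1, r.1), (r.1, r.2.2))
  have hAB : ((A ⊗ₖ B).submatrix f f).PosSemidef := (hA.kronecker hB).submatrix f
  simpa only [f, submatrix_apply, kronecker_apply] using posSemidef_sum_sum_blocks hAB

open scoped MatrixOrder Matrix.Norms.L2Operator in
theorem span_posSemidef {n : Type*} [Finite n] :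
    Submodule.span ℂ {ρ : Matrix n n ℂ | ρ.PosSemidef} = ⊤ := by
  classical
  have := Fintype.ofFinite n
  simpa only [nonneg_iff_posSemidef] using CStarAlgebra.span_nonneg (A := Matrix n n ℂ)

theorem span_isState [Fintype dH] :
    Submodule.span ℂ {ρ : Matrix dH dH ℂ | IsState ρ} = ⊤ := by
  rw [← top_le_iff, ← span_posSemidef, Submodule.span_le]
  intro ρ hρ
  obtain h0 | h0 := eq_or_ne ρ.trace 0
  · simp [hρ.trace_eq_zero_iff.1 h0]
  · have hstate : IsState (ρ.trace⁻¹ • ρ) :=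
      ⟨hρ.smul (inv_nonneg.2 hρ.trace_nonneg), by simp [h0]⟩
    rw [← smul_inv_smul₀ h0 ρ]
    exact Submodule.smul_mem _ _ (Submodule.subset_span hstate)

theorem MatMap.ext_isState [Fintype dH] {Φ Ψ : MatMap dH dK}
    (h : ∀ ρ, IsState ρ → Φ ρ = Ψ ρ) : Φ = Ψ :=
  LinearMap.ext_on span_isState h

end PosSemidef

section Choi

variable [DecidableEq dH]

theorem choiMatrix_sum {ι : Type*} (s : Finset ι) (f : ι → MatMap dH dK) :
    choiMatrix (∑ i ∈ s, f i) = ∑ i ∈ s, choiMatrix (f i) := by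
  ext p q
  simp only [choiMatrix, LinearMap.sum_apply, Matrix.sum_apply]

theorem choiMatrix_comp [Fintype dK] [DecidableEq dK] (Ψ : MatMap dK dV) (Φ : MatMap dH dK) :
    choiMatrix (Ψ ∘ₗ Φ) = of fun p q =>
      ∑ k, ∑ l, choiMatrix Φ (p.1, k) (q.1, l) * choiMatrix Ψ (k, p.2) (l, q.2) := by
  ext p q
  have expand (M : Matrix dK dK ℂ) : Ψ M = ∑ k, ∑ l, M k l • Ψ (single k l 1) := by
    conv_lhs => rw [matrix_eq_sum_single M]
    simp only [map_sum, ← map_smul, smul_single, smul_eq_mul, mul_one]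
  simp only [choiMatrix, LinearMap.comp_apply, of_apply, expand (Φ _),
    Matrix.sum_apply, Matrix.smul_apply, smul_eq_mul]

end Choi

/-- The map taking a matrix `M` to `M.submatrix f f`, the common form of partial traces (after
summing over `f`) and of the exchange of two tensor factors. -/
def submatrixMap (f : dK → dH) : MatMap dH dK where
  toFun M := M.submatrix f f
  map_add' _ _ := rfl
  map_smul' _ _ := rfl

theorem submatrixMap_apply (f : dK → dH) (M : Matrix dH dH ℂ) :
    submatrixMap f M = M.submatrix f f := rfl

section CompletelyPositive

variable [Fintype dH] [DecidableEq dH] [Fintype dK]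

theorem IsCP.sum {ι : Type*} {s : Finset ι} {f : ι → MatMap dH dK} (h : ∀ i ∈ s, IsCP (f i)) :
    IsCP (∑ i ∈ s, f i) := by
  rw [IsCP, choiMatrix_sum]
  exact posSemidef_sum s h

theorem IsCP.comp [DecidableEq dK] [Fintype dV] {Ψ : MatMap dK dV} {Φ : MatMap dH dK}
    (hΨ : IsCP Ψ) (hΦ : IsCP Φ) : IsCP (Ψ ∘ₗ Φ) := by
  rw [IsCP, choiMatrix_comp]
  exact posSemidef_sum_sum_mul hΦ hΨ

theorem isCP_submatrixMap (f : dK → dH) : IsCP (submatrixMap f) := by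
  let v : dH × dK → ℂ := fun p => if p.1 = f p.2 then 1 else 0
  have hchoi : choiMatrix (submatrixMap f) = vecMulVec v (star v) := by
    ext p q
    simp [choiMatrix, submatrixMap_apply, v, single_apply, vecMulVec_apply, ← ite_and, and_comm]
  rw [IsCP, hchoi]
  exact posSemidef_vecMulVec_self_star v

end CompletelyPositive

section Effects

variable [Fintype dH] [DecidableEq dH] [Fintype dK]

theorem trace_dualId_mul (Φ : MatMap dH dK) (ρ : Matrix dH dH ℂ) :
    (dualId Φ * ρ).trace = (Φ ρ).trace := by
  suffices traceLinearMap dH ℂ ℂ ∘ₗ LinearMap.mulLeft ℂ (dualId Φ) =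
      traceLinearMap dK ℂ ℂ ∘ₗ Φ from LinearMap.congr_fun this ρ
  refine Matrix.ext_linearMap ℂ fun i j => LinearMap.ext_ring ?_
  simp [trace_mul_single, dualId]

theorem dualId_sum {ι : Type*} (s : Finset ι) (f : ι → MatMap dH dK) :
    dualId (∑ i ∈ s, f i) = ∑ i ∈ s, dualId (f i) := by
  ext i j
  simp [dualId, Matrix.sum_apply, trace_sum]

theorem IsTP.dualId_comp [Fintype dV] {Ψ : MatMap dK dV} (hΨ : IsTP Ψ) (Φ : MatMap dH dK) :
    dualId (Ψ ∘ₗ Φ) = dualId Φ := by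
  ext i j
  exact hΨ _

theorem IsTP.dualId_eq_one {Φ : MatMap dH dK} (hΦ : IsTP Φ) : dualId Φ = 1 := by
  ext i j
  rw [dualId, hΦ, ← Matrix.one_mul (single j i 1), trace_mul_single]
  simp

theorem IsCP.posSemidef_dualId {Φ : MatMap dH dK} (hΦ : IsCP Φ) : (dualId Φ).PosSemidef := by
  have hsum : dualId Φ = (∑ a, (choiMatrix Φ).submatrix (·, a) (·, a))ᵀ := by
    ext i j
    simp [choiMatrix, Matrix.sum_apply, dualId, trace]
  rw [hsum]
  exact (posSemidef_sum _ fun a _ => hΦ.submatrix (·, a)).transpose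

theorem IsCP.trace_apply_nonneg {Φ : MatMap dH dK} (hΦ : IsCP Φ) {ρ : Matrix dH dH ℂ}
    (hρ : ρ.PosSemidef) : 0 ≤ (Φ ρ).trace := by
  rw [← trace_dualId_mul]
  exact trace_mul_nonneg_of_posSemidef hΦ.posSemidef_dualId hρ

theorem isTNI_of_isTP_sum [Fintype Ω] {f : Ω → MatMap dH dK} (hcp : ∀ x, IsCP (f x))
    (htp : IsTP (∑ x, f x)) (x : Ω) : IsTNI (f x) := by
  intro ρ hρ
  calc (f x ρ).trace
      ≤ ∑ x', (f x' ρ).trace :=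
        Finset.single_le_sum (f := fun x' => (f x' ρ).trace)
          (fun x' _ => (hcp x').trace_apply_nonneg hρ) (Finset.mem_univ x)
    _ = ρ.trace := by rw [← htp ρ, LinearMap.sum_apply, trace_sum]

end Effects

section PartialTrace

theorem ptraceL_sum {ι : Type*} [Fintype dA] (s : Finset ι)
    (M : ι → Matrix (dA × dK) (dA × dK) ℂ) :
    ptraceL (∑ i ∈ s, M i) = ∑ i ∈ s, ptraceL (M i) := by
  ext k l
  simp only [ptraceL, Matrix.sum_apply]
  exact Finset.sum_comm

theorem ptraceR_sum {ι : Type*} [Fintype dV] (s : Finset ι)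
    (M : ι → Matrix (dK × dV) (dK × dV) ℂ) :
    ptraceR (∑ i ∈ s, M i) = ∑ i ∈ s, ptraceR (M i) := by
  ext k l
  simp only [ptraceR, Matrix.sum_apply]
  exact Finset.sum_comm

end PartialTrace

namespace Channel

/-- Tracing out the first tensor factor. -/
def traceLeft [Fintype dA] [DecidableEq dA] [Fintype dK] [DecidableEq dK] :
    Channel (dA × dK) dK where
  map := ∑ a, submatrixMap (a, ·)
  cp := IsCP.sum fun a _ => isCP_submatrixMap (a, ·)
  tp M := by
    simp_rw [LinearMap.sum_apply, trace_sum, submatrixMap_apply, trace, diag_apply]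
    exact (Fintype.sum_prod_type fun p => M p p).symm

theorem traceLeft_apply [Fintype dA] [DecidableEq dA] [Fintype dK] [DecidableEq dK]
    (M : Matrix (dA × dK) (dA × dK) ℂ) : traceLeft.map M = ptraceL M := by
  ext i j
  simp only [traceLeft, LinearMap.sum_apply, submatrixMap_apply, Matrix.sum_apply,
    submatrix_apply, ptraceL]

/-- Tracing out the second tensor factor. -/
def traceRight [Fintype dK] [DecidableEq dK] [Fintype dV] [DecidableEq dV] :
    Channel (dK × dV) dK where
  map := ∑ b, submatrixMap (·, b)
  cp := IsCP.sum fun b _ => isCP_submatrixMap (·, b)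
  tp M := by
    simp_rw [LinearMap.sum_apply, trace_sum, submatrixMap_apply, trace, diag_apply]
    exact (Fintype.sum_prod_type_right fun p => M p p).symm

theorem traceRight_apply [Fintype dK] [DecidableEq dK] [Fintype dV] [DecidableEq dV]
    (M : Matrix (dK × dV) (dK × dV) ℂ) : traceRight.map M = ptraceR M := by
  ext i j
  simp only [traceRight, LinearMap.sum_apply, submatrixMap_apply, Matrix.sum_apply,
    submatrix_apply, ptraceR]

/-- Exchanging the two tensor factors. -/
def swap [Fintype dK] [DecidableEq dK] [Fintype dV] [DecidableEq dV] :
    Channel (dK × dV) (dV × dK) where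
  map := submatrixMap Prod.swap
  cp := isCP_submatrixMap Prod.swap
  tp M := (Equiv.prodComm dV dK).sum_comp fun p => M p p

end Channel

namespace Instrument

variable [Fintype Ω] [Fintype Λ] [Fintype dH] [DecidableEq dH] [Fintype dK]

/-- The channel `Φ^I` induced by an instrument. -/
def channel (I : Instrument Ω dH dK) : Channel dH dK where
  map := ∑ x, I.op x
  cp := IsCP.sum fun x _ => I.cp x
  tp := I.tp

/-- The POVM `A^I` induced by an instrument. -/
def povm (I : Instrument Ω dH dK) : POVM Ω dH where
  elem x := dualId (I.op x)
  pos x := (I.cp x).posSemidef_dualId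
  sum_eq := by rw [← dualId_sum, I.tp.dualId_eq_one]

/-- The instrument which applies `I` and then sends its output through `Ψ`. -/
def andThen [DecidableEq dK] [Fintype dV] (I : Instrument Ω dH dK) (Ψ : Channel dK dV) :
    Instrument Ω dH dV where
  op x := Ψ.map ∘ₗ I.op x
  cp x := Ψ.cp.comp (I.cp x)
  tni x ρ hρ := (Ψ.tp _).trans_le (I.tni x ρ hρ)
  tp ρ := by
    calc ((∑ x, Ψ.map ∘ₗ I.op x) ρ).trace
        = (Ψ.map ((∑ x, I.op x) ρ)).trace := by
          simp only [LinearMap.sum_apply, LinearMap.comp_apply, map_sum]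
      _ = ρ.trace := by rw [Ψ.tp, I.tp]

/-- The instrument with the outcomes of `I` relabelled along an equivalence. -/
def reindex (e : Ω ≃ Λ) (I : Instrument Ω dH dK) : Instrument Λ dH dK where
  op y := I.op (e.symm y)
  cp y := I.cp (e.symm y)
  tni y := I.tni (e.symm y)
  tp := by rw [e.symm.sum_comp]; exact I.tp

/-- The instrument which forgets the second outcome of `G`. -/
def margin (G : Instrument (Ω × Λ) dH dK) : Instrument Ω dH dK :=
  have cp (x : Ω) : IsCP (∑ y, G.op (x, y)) := IsCP.sum fun y _ => G.cp (x, y)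
  have tp : IsTP (∑ x, ∑ y, G.op (x, y)) := by rw [← Fintype.sum_prod_type]; exact G.tp
  { op x := ∑ y, G.op (x, y)
    cp := cp
    tni := isTNI_of_isTP_sum cp tp
    tp := tp }

end Instrument

section Compatible

variable [Fintype Ω] [Fintype Λ] [Fintype dH] [DecidableEq dH] [Fintype dK] [Fintype dV]
  {I : Instrument Ω dH dK} {J : Instrument Λ dH dV}

theorem InsCompatible.symm (h : InsCompatible I J) : InsCompatible J I := by
  classical
  obtain ⟨G, hJ, hI⟩ := h
  exact ⟨(G.reindex (Equiv.prodComm Ω Λ)).andThen Channel.swap, hI, hJ⟩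

theorem InsCompatible.insChCompatible_channel (h : InsCompatible I J) :
    InsChCompatible I J.channel := by
  obtain ⟨G, hJ, hI⟩ := h
  refine ⟨G.margin, fun ρ hρ => ?_, fun x ρ hρ => ?_⟩
  · calc ∑ x, ptraceL ((∑ y, G.op (x, y)) ρ)
        = ∑ x, ∑ y, ptraceL (G.op (x, y) ρ) := by simp only [LinearMap.sum_apply, ptraceL_sum]
      _ = ∑ y, ∑ x, ptraceL (G.op (x, y) ρ) := Finset.sum_comm
      _ = (∑ y, J.op y) ρ := by simp only [hJ _ ρ hρ, LinearMap.sum_apply]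
  · calc ptraceR ((∑ y, G.op (x, y)) ρ)
        = ∑ y, ptraceR (G.op (x, y) ρ) := by simp only [LinearMap.sum_apply, ptraceR_sum]
      _ = I.op x ρ := hI x ρ hρ

theorem InsChCompatible.chCompatible_channel {Ψ : Channel dH dV} (h : InsChCompatible I Ψ) :
    ChCompatible I.channel Ψ := by
  obtain ⟨G, hΨ, hI⟩ := h
  refine ⟨G.channel, fun ρ hρ => ?_, fun ρ hρ => ?_⟩
  · calc ptraceL ((∑ x, G.op x) ρ)
        = ∑ x, ptraceL (G.op x ρ) := by simp only [LinearMap.sum_apply, ptraceL_sum]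
      _ = Ψ.map ρ := hΨ ρ hρ
  · calc ptraceR ((∑ x, G.op x) ρ)
        = ∑ x, ptraceR (G.op x ρ) := by simp only [LinearMap.sum_apply, ptraceR_sum]
      _ = (∑ x, I.op x) ρ := by simp only [hI _ ρ hρ, LinearMap.sum_apply]

theorem InsCompatible.povmInsCompatible_povm (h : InsCompatible I J) :
    POVMInsCompatible I.povm J := by
  classical
  obtain ⟨G, hJ, hI⟩ := h
  have hleft (y : Λ) : ∑ x, Channel.traceLeft.map ∘ₗ G.op (x, y) = J.op y :=
    MatMap.ext_isState fun ρ hρ => by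
      simp only [← hJ y ρ hρ, LinearMap.sum_apply, LinearMap.comp_apply, Channel.traceLeft_apply]
  have hright (x : Ω) : ∑ y, Channel.traceRight.map ∘ₗ G.op (x, y) = I.op x :=
    MatMap.ext_isState fun ρ hρ => by
      simp only [← hI x ρ hρ, LinearMap.sum_apply, LinearMap.comp_apply, Channel.traceRight_apply]
  refine ⟨G.andThen Channel.traceLeft, hleft, fun x => ?_⟩
  calc ∑ y, dualId (Channel.traceLeft.map ∘ₗ G.op (x, y))
      = ∑ y, dualId (Channel.traceRight.map ∘ₗ G.op (x, y)) := by
        simp only [Channel.traceLeft.tp.dualId_comp, Channel.traceRight.tp.dualId_comp]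
    _ = dualId (I.op x) := by rw [← dualId_sum, hright]

theorem POVMInsCompatible.povmCompatible_povm {A : POVM Ω dH} (h : POVMInsCompatible A J) :
    POVMCompatible A J.povm := by
  obtain ⟨G, hJ, hA⟩ := h
  refine ⟨G.povm, fun y => ?_, hA⟩
  calc ∑ x, dualId (G.op (x, y)) = dualId (∑ x, G.op (x, y)) := (dualId_sum _ _).symm
    _ = dualId (J.op y) := by rw [hJ]

theorem POVMInsCompatible.povmChCompatible_channel {A : POVM Ω dH}
    (h : POVMInsCompatible A J) : POVMChCompatible A J.channel := by
  obtain ⟨G, hJ, hA⟩ := h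
  refine ⟨G.margin, ?_, fun x => (dualId_sum _ _).trans (hA x)⟩
  calc ∑ x, ∑ y, G.op (x, y) = ∑ y, ∑ x, G.op (x, y) := Finset.sum_comm
    _ = ∑ y, J.op y := Finset.sum_congr rfl fun y _ => hJ y

end Compatible

/-- If instruments `I` and `J` are compatible, then `X` and `Y` are
compatible for every `X ∈ {I, A^I, Φ^I}` and `Y ∈ {J, A^J, Φ^J}`. -/
theorem compatible_all_induced_pairs
    [Fintype Ω] [Fintype Λ] [Fintype dH] [DecidableEq dH] [Fintype dK] [DecidableEq dK]
    [Fintype dV] [DecidableEq dV]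
    (I : Instrument Ω dH dK) (J : Instrument Λ dH dV)
    (ΦI : Channel dH dK) (hΦI : ΦI.map = ∑ x, I.op x)
    (AI : POVM Ω dH) (hAI : ∀ x, AI.elem x = dualId (I.op x))
    (ΦJ : Channel dH dV) (hΦJ : ΦJ.map = ∑ y, J.op y)
    (AJ : POVM Λ dH) (hAJ : ∀ y, AJ.elem y = dualId (J.op y))
    (h : InsCompatible I J) :
    InsChCompatible I ΦJ ∧ POVMInsCompatible AJ I ∧
    POVMInsCompatible AI J ∧ POVMCompatible AI AJ ∧ POVMChCompatible AI ΦJ ∧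
    InsChCompatible J ΦI ∧ POVMChCompatible AJ ΦI ∧ ChCompatible ΦI ΦJ := by
  obtain rfl : ΦI = I.channel := Channel.ext hΦI
  obtain rfl : ΦJ = J.channel := Channel.ext hΦJ
  obtain rfl : AI = I.povm := POVM.ext (funext hAI)
  obtain rfl : AJ = J.povm := POVM.ext (funext hAJ)
  have hI_ΦJ := h.insChCompatible_channel
  have hAI_J := h.povmInsCompatible_povm
  have hAJ_I := h.symm.povmInsCompatible_povm
  exact ⟨hI_ΦJ, hAJ_I, hAI_J, hAI_J.povmCompatible_povm, hAI_J.povmChCompatible_channel,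
    h.symm.insChCompatible_channel, hAJ_I.povmChCompatible_channel, hI_ΦJ.chCompatible_channel⟩
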